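/- Let Ã be a symmetric N×N real matrix, W an H×H real matrix, V an F×H real matrix, and X an N×F real matrix, with K = ρ(Ã) · ‖W‖₂ < 1. Let H* be the unique fixed point of the reservoir map Φ(M) = tanh(Ã M W + X V), and let H_t be the iterates H_{t+1} = Φ(H_t) from an arbitrary initial condition H₀. Then for every t ≥ 0, ‖H* − H_t‖_F ≤ K^t · ‖H* − H₀‖_F. -/

import Mathlib

noncomputable def frobNorm {m n : Type*} [Fintype m] [Fintype n]
    (M : Matrix m n ℝ) : ℝ :=
  Real.sqrt (∑ i, ∑ j, (M i j) ^ 2)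

noncomputable def specNorm {m n : ℕ} (M : Matrix (Fin m) (Fin n) ℝ) : ℝ :=
  ‖LinearMap.toContinuousLinearMap (Matrix.toEuclideanLin M)‖

noncomputable def specRad {n : ℕ} (A : Matrix (Fin n) (Fin n) ℝ)
    (hA : A.IsHermitian) : ℝ :=
  ⨆ i, |hA.eigenvalues i|

noncomputable def mtanh {m n : Type*} (M : Matrix m n ℝ) : Matrix m n ℝ :=
  Matrix.of fun i j => Real.tanh (M i j)

noncomputable def resMap {N F Hd : ℕ} (Atil : Matrix (Fin N) (Fin N) ℝ)
    (W : Matrix (Fin Hd) (Fin Hd) ℝ) (V : Matrix (Fin F) (Fin Hd) ℝ)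
    (X : Matrix (Fin N) (Fin F) ℝ) (M : Matrix (Fin N) (Fin Hd) ℝ) :
    Matrix (Fin N) (Fin Hd) ℝ :=
  mtanh (Atil * M * W + X * V)

/-!
For a symmetric matrix the spectral radius is the spectral norm. Multiplying a matrix by `Ã` on the
left acts on each column, and multiplying it by `W` on the right acts on each row, so these
operations scale the Frobenius norm by at most `‖Ã‖₂` and `‖W‖₂`. Applying the `1`-Lipschitz
function `tanh` entrywise does not increase Frobenius distances. Hence the reservoir map is
`‖Ã‖₂ ‖W‖₂`-Lipschitz, its `t`-th iterate is `(‖Ã‖₂ ‖W‖₂) ^ t`-Lipschitz, and one of the two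
trajectories may be taken constant at the fixed point.
-/

open Matrix WithLp
open scoped NNReal

section Tanh

theorem hasDerivAt_tanh (x : ℝ) : HasDerivAt Real.tanh (1 / Real.cosh x ^ 2) x := by
  have h := (Real.hasDerivAt_sinh x).fun_div (Real.hasDerivAt_cosh x) (Real.cosh_pos x).ne'
  simpa only [← Real.tanh_eq_sinh_div_cosh, ← sq, Real.cosh_sq_sub_sinh_sq] using h

theorem lipschitzWith_tanh : LipschitzWith 1 Real.tanh := by
  refine lipschitzWith_of_nnnorm_deriv_le (fun x => (hasDerivAt_tanh x).differentiableAt)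
    fun x => ?_
  rw [(hasDerivAt_tanh x).deriv, ← NNReal.coe_le_coe, coe_nnnorm, NNReal.coe_one,
    Real.norm_of_nonneg (by positivity)]
  exact div_le_one_of_le₀ (one_le_pow₀ (Real.one_le_cosh x)) (by positivity)

end Tanh

section SpectralNorm

theorem pi_norm_eq_iSup_norm {ι : Type*} {E : ι → Type*} [Fintype ι]
    [∀ i, SeminormedAddGroup (E i)] (v : ∀ i, E i) : ‖v‖ = ⨆ i, ‖v i‖ := by
  simp only [Pi.norm_def, Finset.sup_univ_eq_ciSup, NNReal.coe_iSup, coe_nnnorm]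

variable {𝕜 m n : Type*} [RCLike 𝕜] [Fintype m] [Fintype n] [DecidableEq n]

/-- The spectral norm of a matrix, as an element of `ℝ≥0`. It is a function rather than the scoped
instance of `Matrix.Norms.L2Operator` so that it can appear next to the Frobenius norm. -/
noncomputable def l2OpNNNorm (A : Matrix m n 𝕜) : ℝ≥0 :=
  ‖LinearMap.toContinuousLinearMap (toEuclideanLin A)‖₊

theorem norm_toLp_mulVec_le (A : Matrix m n 𝕜) (v : n → 𝕜) :
    ‖toLp 2 (A *ᵥ v)‖ ≤ l2OpNNNorm A * ‖toLp 2 v‖ :=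
  (LinearMap.toContinuousLinearMap (toEuclideanLin A)).le_opNorm (toLp 2 v)

theorem l2OpNNNorm_conjTranspose [DecidableEq m] (A : Matrix m n 𝕜) :
    l2OpNNNorm Aᴴ = l2OpNNNorm A :=
  l2_opNNNorm_conjTranspose A

open scoped Matrix.Norms.L2Operator in
theorem l2OpNNNorm_eq_nnnorm_eigenvalues {A : Matrix n n 𝕜} (hA : A.IsHermitian) :
    l2OpNNNorm A = ‖hA.eigenvalues‖₊ := by
  let U := hA.eigenvectorUnitary
  let D : Matrix n n 𝕜 := diagonal (RCLike.ofReal ∘ hA.eigenvalues)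
  have hUDU : A = U * D * (star U : unitaryGroup n 𝕜) := hA.spectral_theorem
  have hAD : ‖A‖ = ‖D‖ := by
    rw [hUDU, CStarRing.norm_mul_coe_unitary, CStarRing.norm_coe_unitary_mul]
  calc l2OpNNNorm A = ‖D‖₊ := NNReal.eq hAD
    _ = ‖(RCLike.ofReal ∘ hA.eigenvalues : n → 𝕜)‖₊ := l2_opNNNorm_diagonal _
    _ = ‖hA.eigenvalues‖₊ := by simp [Pi.nnnorm_def]

end SpectralNorm

open scoped Matrix.Norms.Frobenius

section FrobeniusNorm

variable {𝕜 α β l m n : Type*} [RCLike 𝕜] [SeminormedAddCommGroup α] [SeminormedAddCommGroup β]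
  [Fintype l] [Fintype m] [Fintype n]

theorem frobenius_norm_eq_sqrt (M : Matrix m n α) : ‖M‖ = √(∑ i, ∑ j, ‖M i j‖ ^ 2) := by
  simp [frobenius_norm_def, Real.sqrt_eq_rpow]

theorem frobenius_norm_sq_eq_sum_col (M : Matrix m n α) :
    ‖M‖ ^ 2 = ∑ j, ‖toLp 2 (M.col j)‖ ^ 2 := by
  rw [frobenius_norm_eq_sqrt, Real.sq_sqrt (by positivity), Finset.sum_comm]
  simp [PiLp.norm_sq_eq_of_L2]

theorem frobenius_norm_mul_le_l2OpNNNorm_mul [DecidableEq m] (A : Matrix l m 𝕜)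
    (M : Matrix m n 𝕜) : ‖A * M‖ ≤ l2OpNNNorm A * ‖M‖ := by
  refine le_of_sq_le_sq ?_ (by positivity)
  calc ‖A * M‖ ^ 2 = ∑ j, ‖toLp 2 (A *ᵥ M.col j)‖ ^ 2 := frobenius_norm_sq_eq_sum_col _
    _ ≤ ∑ j, (l2OpNNNorm A * ‖toLp 2 (M.col j)‖) ^ 2 := by
      gcongr
      exact norm_toLp_mulVec_le A _
    _ = (l2OpNNNorm A * ‖M‖) ^ 2 := by
      simp only [mul_pow, frobenius_norm_sq_eq_sum_col M, Finset.mul_sum]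

theorem frobenius_norm_mul_le_mul_l2OpNNNorm [DecidableEq n] (M : Matrix l m 𝕜) (W : Matrix m n 𝕜) :
    ‖M * W‖ ≤ ‖M‖ * l2OpNNNorm W := by
  classical
  have h := frobenius_norm_mul_le_l2OpNNNorm_mul Wᴴ Mᴴ
  rwa [← conjTranspose_mul, frobenius_norm_conjTranspose, frobenius_norm_conjTranspose,
    l2OpNNNorm_conjTranspose, mul_comm] at h

theorem lipschitzWith_mul_left_frobenius [DecidableEq m] (A : Matrix l m 𝕜) :
    LipschitzWith (l2OpNNNorm A) fun M : Matrix m n 𝕜 => A * M :=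
  .of_dist_le_mul fun P Q => by
    simpa only [dist_eq_norm, Matrix.mul_sub] using frobenius_norm_mul_le_l2OpNNNorm_mul A (P - Q)

theorem lipschitzWith_mul_right_frobenius [DecidableEq n] (W : Matrix m n 𝕜) :
    LipschitzWith (l2OpNNNorm W) fun M : Matrix l m 𝕜 => M * W :=
  .of_dist_le_mul fun P Q => by
    simpa only [dist_eq_norm, Matrix.sub_mul, mul_comm] using
      frobenius_norm_mul_le_mul_l2OpNNNorm (P - Q) W

theorem lipschitzWith_map_frobenius {C : ℝ≥0} {f : α → β} (hf : LipschitzWith C f) :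
    LipschitzWith C fun M : Matrix m n α => M.map f := by
  refine .of_dist_le_mul fun P Q => ?_
  rw [dist_eq_norm, dist_eq_norm, frobenius_norm_eq_sqrt, frobenius_norm_eq_sqrt]
  refine Real.sqrt_le_iff.2 ⟨by positivity, ?_⟩
  rw [mul_pow, Real.sq_sqrt (by positivity)]
  simp only [Finset.mul_sum, ← mul_pow]
  gcongr with i _ j _
  exact hf.norm_sub_le (P i j) (Q i j)

theorem lipschitzWith_map_mul_mul_add_frobenius {k : Type*} [Fintype k] [DecidableEq m]
    [DecidableEq k] {C : ℝ≥0} {f : 𝕜 → α} (hf : LipschitzWith C f) (A : Matrix l m 𝕜)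
    (W : Matrix n k 𝕜) (B : Matrix l k 𝕜) :
    LipschitzWith (C * (l2OpNNNorm A * l2OpNNNorm W))
      fun M : Matrix m n 𝕜 => (A * M * W + B).map f := by
  have hmul : LipschitzWith (l2OpNNNorm A * l2OpNNNorm W) fun M : Matrix m n 𝕜 => A * M * W := by
    rw [mul_comm]
    exact (lipschitzWith_mul_right_frobenius W).comp (lipschitzWith_mul_left_frobenius A)
  have htranslate : LipschitzWith 1 fun M : Matrix l k 𝕜 => M + B :=
    (isometry_add_right B).lipschitz
  simpa only [one_mul, Function.comp_def] using
    (lipschitzWith_map_frobenius hf).comp (htranslate.comp hmul)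

end FrobeniusNorm

section Reservoir

theorem coe_l2OpNNNorm {m n : ℕ} (A : Matrix (Fin m) (Fin n) ℝ) : l2OpNNNorm A = specNorm A :=
  rfl

theorem frobNorm_eq_norm {m n : Type*} [Fintype m] [Fintype n] (M : Matrix m n ℝ) :
    frobNorm M = ‖M‖ := by
  simp [frobNorm, frobenius_norm_eq_sqrt]

theorem specRad_eq_specNorm {n : ℕ} {A : Matrix (Fin n) (Fin n) ℝ} (hA : A.IsHermitian) :
    specRad A hA = specNorm A := by
  rw [← coe_l2OpNNNorm, l2OpNNNorm_eq_nnnorm_eigenvalues hA, coe_nnnorm, pi_norm_eq_iSup_norm]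
  rfl

variable {N F Hd : ℕ} (A : Matrix (Fin N) (Fin N) ℝ) (W : Matrix (Fin Hd) (Fin Hd) ℝ)
  (V : Matrix (Fin F) (Fin Hd) ℝ) (X : Matrix (Fin N) (Fin F) ℝ)

theorem lipschitzWith_resMap : LipschitzWith (l2OpNNNorm A * l2OpNNNorm W) (resMap A W V X) := by
  rw [← one_mul (_ * _)]
  exact lipschitzWith_map_mul_mul_add_frobenius lipschitzWith_tanh A W (X * V)

theorem reservoir_iterates_dist_le_general (P Q : Matrix (Fin N) (Fin Hd) ℝ) (t : ℕ) :
    frobNorm ((resMap A W V X)^[t] P - (resMap A W V X)^[t] Q)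
      ≤ (specNorm A * specNorm W) ^ t * frobNorm (P - Q) := by
  simpa only [frobNorm_eq_norm, NNReal.coe_pow, NNReal.coe_mul, coe_l2OpNNNorm] using
    ((lipschitzWith_resMap A W V X).iterate t).norm_sub_le P Q

end Reservoir

/-- Inequality (12): ‖H* − H_t‖_F ≤ K^t ‖H* − H₀‖_F. -/
theorem reservoir_iterates_dist_le {N F Hd : ℕ}
    (Atil : Matrix (Fin N) (Fin N) ℝ) (hA : Atil.IsHermitian)
    (W : Matrix (Fin Hd) (Fin Hd) ℝ) (V : Matrix (Fin F) (Fin Hd) ℝ)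
    (X : Matrix (Fin N) (Fin F) ℝ)
    (hK : specRad Atil hA * specNorm W < 1)
    (Hstar : Matrix (Fin N) (Fin Hd) ℝ)
    (hfix : resMap Atil W V X Hstar = Hstar)
    (H0 : Matrix (Fin N) (Fin Hd) ℝ) (t : ℕ) :
    frobNorm (Hstar - (resMap Atil W V X)^[t] H0)
      ≤ (specRad Atil hA * specNorm W) ^ t * frobNorm (Hstar - H0) := by
  simpa only [specRad_eq_specNorm, Function.iterate_fixed hfix] using
    reservoir_iterates_dist_le_general Atil W V X Hstar H0 t
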